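/- Two Cauchy sequences (x⁽ⁿ⁾) and (y⁽ⁿ⁾) of rational numbers are equivalent (≈) if and only if the upper limit of (ι(x⁽ⁿ⁾)) in (𝓡,⪯) is equivalent in 𝓡 to the upper limit of (ι(y⁽ⁿ⁾)), where the upper limit of a bounded sequence (z⁽ⁿ⁾) in 𝓡 is inf{ sup{z⁽ᵏ⁾ : k ≥ n} : n ∈ ℕ }. -/

import Mathlib

/-- The ambient space `𝓡` of decimal representations: an integer part together
with a sequence of digits in `{0,…,9}`. -/
abbrev DecimalRep := ℤ × (ℕ → Fin 10)

namespace DecimalRep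

open scoped Classical

/-- The truncation `[x]_k = x₀ + ∑_{i=1}^k x_i / 10^i` of `x` up to the `k`-th
digit, as a rational number. -/
def trunc (x : DecimalRep) (k : ℕ) : ℚ :=
  (x.1 : ℚ) + ∑ i ∈ Finset.range k, ((x.2 i : ℕ) : ℚ) / 10 ^ (i + 1)

/-- The order `⪯` on `𝓡`: `x ⪯ y` iff every truncation of `x` is at most the
corresponding truncation of `y`. -/
def le (x y : DecimalRep) : Prop := ∀ k : ℕ, trunc x k ≤ trunc y k

/-- The strict order `≺` on `𝓡`. -/
def lt (x y : DecimalRep) : Prop := le x y ∧ x ≠ y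

/-- Two decimal representations are equivalent ("have no gap") iff there is no
third element lying between them. -/
def equiv (x y : DecimalRep) : Prop :=
  ¬ ∃ z : DecimalRep, z ≠ x ∧ z ≠ y ∧
      ((le x z ∧ le z y) ∨ (le y z ∧ le z x))

/-- `𝓡₉`: decimal representations ending in an infinite string of nines. -/
def allNines (x : DecimalRep) : Prop := ∃ N : ℕ, ∀ k ≥ N, x.2 k = 9

/-- `ℚ_F`: decimal representations ending in an infinite string of zeros. -/
def finiteDec (x : DecimalRep) : Prop := ∃ N : ℕ, ∀ k ≥ N, x.2 k = 0

/-- The decimal expansion map `ι : ℚ → 𝓡`, satisfying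
`[ι(α)]_k = ⌊10^k·α⌋/10^k` for all `k`. -/
def iota (α : ℚ) : DecimalRep :=
  (⌊α⌋, fun k => ⟨(⌊α * 10 ^ (k + 1)⌋ % 10).toNat, by
    have h1 : (0 : ℤ) ≤ ⌊α * 10 ^ (k + 1)⌋ % 10 := Int.emod_nonneg _ (by norm_num)
    have h2 : ⌊α * 10 ^ (k + 1)⌋ % 10 < 10 := Int.emod_lt_of_pos _ (by norm_num)
    omega⟩)

/-- `M` is a least upper bound of `W` in `(𝓡,⪯)`. -/
def IsLub (W : Set DecimalRep) (M : DecimalRep) : Prop :=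
  (∀ w ∈ W, le w M) ∧ ∀ M' : DecimalRep, (∀ w ∈ W, le w M') → le M M'

/-- `M` is a greatest lower bound of `W` in `(𝓡,⪯)`. -/
def IsGlb (W : Set DecimalRep) (M : DecimalRep) : Prop :=
  (∀ w ∈ W, le M w) ∧ ∀ M' : DecimalRep, (∀ w ∈ W, le M' w) → le M' M

/-- The least upper bound of a set in `(𝓡,⪯)` (junk value if none exists). -/
noncomputable def sup (W : Set DecimalRep) : DecimalRep :=
  if h : ∃ M, IsLub W M then h.choose else default

/-- The greatest lower bound of a set in `(𝓡,⪯)` (junk value if none exists). -/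
noncomputable def inf (W : Set DecimalRep) : DecimalRep :=
  if h : ∃ M, IsGlb W M then h.choose else default

/-- Addition `x ⊕ y := sup {ι([x]_k + [y]_k) : k ∈ ℕ}` on `𝓡`. -/
noncomputable def add (x y : DecimalRep) : DecimalRep :=
  sup { z | ∃ k : ℕ, z = iota (trunc x k + trunc y k) }

/-- The "additive inverse" map `Ψ(x₀.x₁x₂⋯) = (−1−x₀).(9−x₁)(9−x₂)⋯`. -/
def psi (x : DecimalRep) : DecimalRep :=
  (-1 - x.1, fun k => ⟨9 - (x.2 k).val, by have := (x.2 k).isLt; omega⟩)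

/-- The signal map: `0` on the nonnegative part, `1` on the negative part. -/
noncomputable def sign (x : DecimalRep) : ℕ :=
  if le (iota 0) x then 0 else 1

/-- The absolute value `‖x‖ := max {x, Ψ(x)}` with respect to `⪯`. -/
noncomputable def norm (x : DecimalRep) : DecimalRep :=
  if le x (psi x) then psi x else x

/-- Multiplication
`x ⊗ y := Ψ^(sign x + sign y) (sup {ι([‖x‖]_k · [‖y‖]_k) : k ∈ ℕ})` on `𝓡`. -/
noncomputable def mul (x y : DecimalRep) : DecimalRep :=
  psi^[sign x + sign y]
    (sup { z | ∃ k : ℕ, z = iota (trunc (norm x) k * trunc (norm y) k) })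

/-- The multiplicative inverse
`x⁻¹ := Ψ^(sign x) (inf {ι(1/[‖x‖]_k) : k ∈ ℕ, [‖x‖]_k > 0})`. -/
noncomputable def inv (x : DecimalRep) : DecimalRep :=
  psi^[sign x]
    (inf { z | ∃ k : ℕ, 0 < trunc (norm x) k ∧ z = iota (1 / trunc (norm x) k) })

/-- A sequence of rationals is Cauchy. -/
def IsCauchy (x : ℕ → ℚ) : Prop :=
  ∀ ε : ℚ, 0 < ε → ∃ N : ℕ, ∀ m n : ℕ, N ≤ m → N ≤ n → |x m - x n| < ε

/-- The upper limit `inf { sup {f k : k ≥ n} : n ∈ ℕ }` of a sequence in `𝓡`. -/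
noncomputable def upperLimit (f : ℕ → DecimalRep) : DecimalRep :=
  inf { z | ∃ n : ℕ, z = sup { w | ∃ k : ℕ, n ≤ k ∧ w = f k } }

/-- The lower limit `sup { inf {f k : k ≥ n} : n ∈ ℕ }` of a sequence in `𝓡`. -/
noncomputable def lowerLimit (f : ℕ → DecimalRep) : DecimalRep :=
  sup { z | ∃ n : ℕ, z = inf { w | ∃ k : ℕ, n ≤ k ∧ w = f k } }

end DecimalRep

namespace DecimalRep

/-- Scaled truncation. -/
def T (x : DecimalRep) : ℕ → ℤ
  | 0 => x.1
  | k + 1 => 10 * T x k + ((x.2 k : ℕ) : ℤ)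

theorem trunc_eq (x : DecimalRep) (k : ℕ) : trunc x k * 10 ^ k = (T x k : ℚ) := by
  induction k with
  | zero => simp [trunc, T]
  | succ k ih =>
    have : trunc x (k+1) = trunc x k + ((x.2 k : ℕ) : ℚ) / 10 ^ (k + 1) := by
      simp only [trunc, Finset.sum_range_succ]; ring
    rw [this, add_mul, div_mul_cancel₀ _ (by positivity), pow_succ, ← mul_assoc, ih]
    simp only [T]; push_cast; ring

theorem le_iff (x y : DecimalRep) : le x y ↔ ∀ k, T x k ≤ T y k := by
  refine forall_congr' fun k => ?_
  have h : (0:ℚ) < 10 ^ k := by positivity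
  rw [← mul_le_mul_iff_of_pos_right h, trunc_eq, trunc_eq]
  exact Int.cast_le

theorem T_ext {x y : DecimalRep} (h : ∀ k, T x k = T y k) : x = y := by
  refine Prod.ext (h 0) (funext fun k => Fin.ext ?_)
  have h1 := h k
  have h2 := h (k+1)
  simp only [T] at h2
  omega

theorem T_succ_bd (x : DecimalRep) (k : ℕ) :
    10 * T x k ≤ T x (k+1) ∧ T x (k+1) ≤ 10 * T x k + 9 := by
  have := (x.2 k).isLt
  simp only [T]
  omega

theorem T_lt_mono {x y : DecimalRep} {k j : ℕ} (hkj : k ≤ j) (h : T x k < T y k) :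
    T x j < T y j := by
  induction j, hkj using Nat.le_induction with
  | base => exact h
  | succ j _ ih =>
    have := T_succ_bd x j
    have := T_succ_bd y j
    omega

theorem le_of_T_lt {x y : DecimalRep} {k : ℕ} (h : T x k < T y k) : le x y := by
  rw [le_iff]
  intro j
  by_contra! hj
  have h1 := T_lt_mono (le_max_left k j) h
  have h2 := T_lt_mono (le_max_right k j) hj
  omega

theorem le_antisymm' {x y : DecimalRep} (h : le x y) (h' : le y x) : x = y := by
  rw [le_iff] at h h'
  exact T_ext fun k => le_antisymm (h k) (h' k)

theorem exists_of_seq (a : ℕ → ℤ) (h : ∀ k, a (k+1) / 10 = a k) :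
    ∃ x : DecimalRep, ∀ k, T x k = a k := by
  refine ⟨(a 0, fun k => ⟨(a (k+1) % 10).toNat, by omega⟩), fun k => ?_⟩
  induction k with
  | zero => rfl
  | succ k ih =>
    simp only [T] at ih ⊢
    have := h k
    rw [ih]
    omega

theorem T_iota (q : ℚ) (k : ℕ) : T (iota q) k = ⌊q * 10 ^ k⌋ := by
  induction k with
  | zero => simp [T, iota]
  | succ k ih =>
    simp only [T]
    rw [ih]
    have key : ⌊q * 10 ^ (k+1)⌋ / 10 = ⌊q * 10 ^ k⌋ := by
      have e : q * 10 ^ (k+1) = 10 * (q * 10 ^ k) := by ring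
      rw [e]
      set r := q * 10 ^ k
      have h1 := Int.floor_le r
      have h2 := Int.lt_floor_add_one r
      have h3 : 10 * ⌊r⌋ ≤ ⌊10 * r⌋ := by
        rw [Int.le_floor]; push_cast; linarith
      have h4 : ⌊10 * r⌋ < 10 * ⌊r⌋ + 10 := by
        rw [Int.floor_lt]; push_cast; linarith
      omega
    simp only [iota]
    omega

theorem iota_mono {p q : ℚ} (h : p ≤ q) : le (iota p) (iota q) := by
  rw [le_iff]
  intro k
  rw [T_iota, T_iota]
  exact Int.floor_le_floor (by gcongr)

theorem sup_spec (W : Set DecimalRep) (hne : W.Nonempty) (B : DecimalRep)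
    (hB : ∀ w ∈ W, le w B) :
    (∀ w ∈ W, le w (sup W)) ∧ ∀ k, ∃ w ∈ W, T w k = T (sup W) k := by
  have hmax : ∀ k, ∃ a, (∃ w ∈ W, T w k = a) ∧ ∀ w ∈ W, T w k ≤ a := by
    intro k
    obtain ⟨w0, hw0⟩ := hne
    obtain ⟨a, ha, ha'⟩ := Int.exists_greatest_of_bdd (P := fun a => ∃ w ∈ W, T w k = a)
      ⟨T B k, by rintro z ⟨w, hw, rfl⟩; exact (le_iff _ _).1 (hB w hw) k⟩ ⟨_, w0, hw0, rfl⟩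
    exact ⟨a, ha, fun w hw => ha' _ ⟨w, hw, rfl⟩⟩
  choose a ha ha' using hmax
  obtain ⟨M, hM⟩ := exists_of_seq a (by
    intro k
    obtain ⟨w, hw, hwk⟩ := ha k
    obtain ⟨v, hv, hvk⟩ := ha (k+1)
    have := ha' (k+1) w hw
    have := ha' k v hv
    have := T_succ_bd w k
    have := T_succ_bd v k
    omega)
  have hL : IsLub W M := by
    refine ⟨fun w hw => (le_iff _ _).2 fun k => hM k ▸ ha' k w hw, fun M' h => (le_iff _ _).2 fun k => ?_⟩
    obtain ⟨w, hw, hwk⟩ := ha k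
    rw [hM, ← hwk]
    exact (le_iff _ _).1 (h w hw) k
  have hex : ∃ M, IsLub W M := ⟨M, hL⟩
  have hs : IsLub W (sup W) := by
    unfold sup
    rw [dif_pos hex]
    exact hex.choose_spec
  have : sup W = M := le_antisymm' (hs.2 _ hL.1) (hL.2 _ hs.1)
  rw [this]
  exact ⟨hL.1, fun k => hM k ▸ ha k⟩

theorem inf_spec (W : Set DecimalRep) (hne : W.Nonempty) (B : DecimalRep)
    (hB : ∀ w ∈ W, le B w) :
    (∀ w ∈ W, le (inf W) w) ∧ ∀ k, ∃ w ∈ W, T w k = T (inf W) k := by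
  have hmax : ∀ k, ∃ a, (∃ w ∈ W, T w k = a) ∧ ∀ w ∈ W, a ≤ T w k := by
    intro k
    obtain ⟨w0, hw0⟩ := hne
    obtain ⟨a, ha, ha'⟩ := Int.exists_least_of_bdd (P := fun a => ∃ w ∈ W, T w k = a)
      ⟨T B k, by rintro z ⟨w, hw, rfl⟩; exact (le_iff _ _).1 (hB w hw) k⟩ ⟨_, w0, hw0, rfl⟩
    exact ⟨a, ha, fun w hw => ha' _ ⟨w, hw, rfl⟩⟩
  choose a ha ha' using hmax
  obtain ⟨M, hM⟩ := exists_of_seq a (by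
    intro k
    obtain ⟨w, hw, hwk⟩ := ha k
    obtain ⟨v, hv, hvk⟩ := ha (k+1)
    have := ha' (k+1) w hw
    have := ha' k v hv
    have := T_succ_bd w k
    have := T_succ_bd v k
    omega)
  have hL : IsGlb W M := by
    refine ⟨fun w hw => (le_iff _ _).2 fun k => hM k ▸ ha' k w hw, fun M' h => (le_iff _ _).2 fun k => ?_⟩
    obtain ⟨w, hw, hwk⟩ := ha k
    rw [hM, ← hwk]
    exact (le_iff _ _).1 (h w hw) k
  have hex : ∃ M, IsGlb W M := ⟨M, hL⟩
  have hs : IsGlb W (inf W) := by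
    unfold inf
    rw [dif_pos hex]
    exact hex.choose_spec
  have : inf W = M := le_antisymm' (hL.2 _ hs.1) (hs.2 _ hL.1)
  rw [this]
  exact ⟨hL.1, fun k => hM k ▸ ha k⟩

theorem cauchy_bdd {x : ℕ → ℚ} (hx : IsCauchy x) : ∃ C, ∀ n, |x n| ≤ C := by
  obtain ⟨N, hN⟩ := hx 1 one_pos
  refine ⟨∑ i ∈ Finset.range (N+1), |x i| + 1, fun n => ?_⟩
  have hs : ∀ i ∈ Finset.range (N+1), |x i| ≤ ∑ i ∈ Finset.range (N+1), |x i| :=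
    fun i hi => Finset.single_le_sum (f := fun i => |x i|) (fun _ _ => abs_nonneg _) hi
  by_cases h : n < N + 1
  · have := hs n (Finset.mem_range.2 h)
    linarith
  · have h1 := hs N (Finset.mem_range.2 (by omega))
    have h2 := hN n N (by omega) le_rfl
    have h3 := abs_sub_abs_le_abs_sub (x n) (x N)
    linarith

theorem upperLimit_spec {x : ℕ → ℚ} (hx : IsCauchy x) (k : ℕ) :
    ∃ N, ∀ n, N ≤ n →
      |(T (upperLimit fun n => iota (x n)) k : ℚ) - x n * 10 ^ k| ≤ 2 := by
  obtain ⟨C, hC⟩ := cauchy_bdd hx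
  have hp : (0:ℚ) < 10 ^ k := by positivity
  obtain ⟨N, hN⟩ := hx (1 / 10 ^ k) (by positivity)
  have hN' : ∀ m n, N ≤ m → N ≤ n → x m * 10 ^ k < x n * 10 ^ k + 1 := by
    intro m n hm hn
    have h := (abs_lt.1 (hN m n hm hn)).2
    rw [lt_div_iff₀ hp] at h
    linarith
  have hS := fun n => sup_spec { w | ∃ k : ℕ, n ≤ k ∧ w = iota (x k) } ⟨_, n, le_rfl, rfl⟩
    (iota C) (by rintro w ⟨m, _, rfl⟩; exact iota_mono ((le_abs_self _).trans (hC m)))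
  have hI := inf_spec { z | ∃ n : ℕ, z = sup { w | ∃ k : ℕ, n ≤ k ∧ w = iota (x k) } }
    ⟨_, 0, rfl⟩ (iota (-C)) (by
      rintro w ⟨n, rfl⟩
      rw [le_iff]
      intro j
      exact ((le_iff _ _).1 (iota_mono (abs_le.1 (hC n)).1) j).trans
        ((le_iff _ _).1 ((hS n).1 _ ⟨n, le_rfl, rfl⟩) j))
  refine ⟨N, fun n hn => ?_⟩
  change |(T (inf { z | ∃ n : ℕ, z = sup { w | ∃ k : ℕ, n ≤ k ∧ w = iota (x k) } }) k : ℚ) - _| ≤ 2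
  set U := inf { z | ∃ n : ℕ, z = sup { w | ∃ k : ℕ, n ≤ k ∧ w = iota (x k) } }
  rw [abs_le]
  constructor
  · obtain ⟨_, ⟨n', rfl⟩, h⟩ := hI.2 k
    have h1 := (le_iff _ _).1 ((hS n').1 _ ⟨max n' N, le_max_left _ _, rfl⟩) k
    rw [h, T_iota] at h1
    have h2 := Int.lt_floor_add_one (x (max n' N) * 10 ^ k)
    have h3 := hN' n (max n' N) hn (le_max_right _ _)
    have h4 : ((⌊x (max n' N) * 10 ^ k⌋ : ℤ) : ℚ) ≤ T U k := by exact_mod_cast h1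
    linarith
  · have h0 := (le_iff _ _).1 (hI.1 _ ⟨N, rfl⟩) k
    obtain ⟨_, ⟨m, hm, rfl⟩, h⟩ := (hS N).2 k
    rw [← h, T_iota] at h0
    have h2 := Int.floor_le (x m * 10 ^ k)
    have h3 := hN' m n hm hn
    have h4 : (T U k : ℚ) ≤ ((⌊x m * 10 ^ k⌋ : ℤ) : ℚ) := by exact_mod_cast h0
    linarith

theorem not_between {U V : DecimalRep} (h : ∀ k, |T U k - T V k| ≤ 5) (z : DecimalRep)
    (hU : z ≠ U) (hV : z ≠ V) (h1 : le U z) (h2 : le z V) : False := by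
  rw [le_iff] at h1 h2
  obtain ⟨k, hk⟩ : ∃ k, T U k < T z k := by
    by_contra! hc
    exact hU (T_ext fun k => le_antisymm (hc k) (h1 k))
  obtain ⟨j, hj⟩ : ∃ k, T z k < T V k := by
    by_contra! hc
    exact hV (T_ext fun k => le_antisymm (h2 k) (hc k))
  have a := T_lt_mono (le_max_left k j) hk
  have b := T_lt_mono (le_max_right k j) hj
  have c := T_succ_bd U (max k j)
  have d := T_succ_bd V (max k j)
  have e := abs_le.1 (h (max k j + 1))
  omega

theorem exists_between' {U V : DecimalRep} {k : ℕ} (h : T U k + 1 < T V k) :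
    ∃ z : DecimalRep, z ≠ U ∧ z ≠ V ∧ le U z ∧ le z V := by
  have hz : T (iota (((T U k + 1 : ℤ) : ℚ) / 10 ^ k)) k = T U k + 1 := by
    rw [T_iota, div_mul_cancel₀ _ (by positivity), Int.floor_intCast]
  refine ⟨iota (((T U k + 1 : ℤ) : ℚ) / 10 ^ k), ?_, ?_, le_of_T_lt (k := k) (by omega),
    le_of_T_lt (k := k) (by omega)⟩
  · intro e; rw [e] at hz; omega
  · intro e; rw [e] at hz; omega

theorem equiv_of {U V : DecimalRep} (h : ∀ k, |T U k - T V k| ≤ 5) : equiv U V := by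
  rintro ⟨z, hU, hV, ⟨h1, h2⟩ | ⟨h1, h2⟩⟩
  · exact not_between h z hU hV h1 h2
  · exact not_between (fun k => by rw [abs_sub_comm]; exact h k) z hV hU h1 h2

theorem of_equiv {U V : DecimalRep} (h : equiv U V) (k : ℕ) : |T U k - T V k| ≤ 1 := by
  by_contra hc
  apply h
  rw [abs_le] at hc
  by_cases h1 : T U k + 1 < T V k
  · obtain ⟨z, a, b, c, d⟩ := exists_between' h1
    exact ⟨z, a, b, Or.inl ⟨c, d⟩⟩
  · have h2 : T V k + 1 < T U k := by omega
    obtain ⟨z, a, b, c, d⟩ := exists_between' h2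
    exact ⟨z, b, a, Or.inr ⟨c, d⟩⟩

end DecimalRep

open DecimalRep in
/-- Two Cauchy sequences of rationals are equivalent iff the upper limits of
their decimal expansions are equivalent in `𝓡`. -/
theorem cauchy_equiv_iff_upperLimit_equiv (x y : ℕ → ℚ)
    (hx : IsCauchy x) (hy : IsCauchy y) :
    (∀ ε : ℚ, 0 < ε → ∃ N : ℕ, ∀ n : ℕ, N ≤ n → |x n - y n| < ε) ↔
      equiv (upperLimit fun n => iota (x n)) (upperLimit fun n => iota (y n)) := by
  have hX := upperLimit_spec hx
  have hY := upperLimit_spec hy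
  set U := upperLimit fun n => iota (x n)
  set V := upperLimit fun n => iota (y n)
  constructor
  · intro h
    refine equiv_of fun k => ?_
    have hp : (0:ℚ) < 10 ^ k := by positivity
    obtain ⟨N1, h1⟩ := hX k
    obtain ⟨N2, h2⟩ := hY k
    obtain ⟨N3, h3⟩ := h (1 / 10 ^ k) (by positivity)
    set n := N1 + N2 + N3
    have a := abs_le.1 (h1 n (by omega))
    have b := abs_le.1 (h2 n (by omega))
    have c := abs_lt.1 (h3 n (by omega))
    have c1 := c.1
    have c2 := c.2
    rw [lt_div_iff₀ hp] at c2
    rw [← neg_div, div_lt_iff₀ hp] at c1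
    have : |(T U k : ℚ) - T V k| ≤ 5 := by
      rw [abs_le]
      constructor <;> linarith [a.1, a.2, b.1, b.2]
    exact_mod_cast this
  · intro h ε hε
    obtain ⟨k, hk⟩ := exists_nat_gt (5 / ε)
    have hk' : (k : ℚ) < 10 ^ k := by exact_mod_cast Nat.lt_pow_self (by norm_num : 1 < 10)
    have hp : (0:ℚ) < 10 ^ k := by positivity
    have hlt : 5 < ε * 10 ^ k := by
      have := hk.trans hk'
      rw [div_lt_iff₀ hε] at this
      linarith
    obtain ⟨N1, h1⟩ := hX k
    obtain ⟨N2, h2⟩ := hY k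
    refine ⟨N1 + N2, fun n hn => ?_⟩
    have a := abs_le.1 (h1 n (by omega))
    have b := abs_le.1 (h2 n (by omega))
    have c : |(T U k : ℚ) - T V k| ≤ 1 := by exact_mod_cast of_equiv h k
    have c := abs_le.1 c
    rw [abs_lt]
    constructor
    · refine lt_of_mul_lt_mul_right ?_ hp.le
      linarith [a.1, a.2, b.1, b.2, c.1, c.2]
    · refine lt_of_mul_lt_mul_right ?_ hp.le
      linarith [a.1, a.2, b.1, b.2, c.1, c.2]
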